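/- arXiv:math/0012202 — 6 statements merged into one kernel-verified Lean document; each statement's English description precedes it below -/
import Mathlib

section
/- The set Γ₆^bil = Γ₆^♮ ∪ ζΓ₆^♮ is a subgroup of Sp(4,ℤ); in particular Γ₆^♮ is a subgroup of Sp(4,ℤ), the matrix ζ lies in Sp(4,ℤ), satisfies ζ² = I₄, and normalizes Γ₆^♮ (i.e. ζ·Γ₆^♮·ζ⁻¹ = Γ₆^♮). -/
open Matrix Polynomial

/-- 4×4 integer matrices. -/
abbrev M4 : Type := Matrix (Fin 4) (Fin 4) ℤ

/-- The standard symplectic form matrix J = [[0, I₂], [−I₂, 0]]. -/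
def J4 : M4 := !![0,0,1,0; 0,0,0,1; -1,0,0,0; 0,-1,0,0]

/-- Sp(4,ℤ): integer matrices γ with ᵗγ·J·γ = J. -/
def Sp4Z : Set M4 := {γ | γᵀ * J4 * γ = J4}

/-- The congruence pattern [[6,1,6,6],[6,6,6,36],[6,1,6,6],[1,1,1,6]]. -/
def pat6 : Matrix (Fin 4) (Fin 4) ℤ := !![6,1,6,6; 6,6,6,36; 6,1,6,6; 1,1,1,6]

/-- Γ₆^♮: elements of Sp(4,ℤ) with γ − I₄ entrywise in the pattern. -/
def Gamma6nat : Set M4 := {γ | γ ∈ Sp4Z ∧ ∀ i j, pat6 i j ∣ (γ - 1) i j}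

/-- ζ = diag(−1,1,−1,1). -/
def zetaM : M4 := !![-1,0,0,0; 0,1,0,0; 0,0,-1,0; 0,0,0,1]

/-- Γ₆^bil = Γ₆^♮ ∪ ζ·Γ₆^♮. -/
def Gamma6bil : Set M4 := Gamma6nat ∪ (fun γ => zetaM * γ) '' Gamma6nat


theorem pat6_mul : ∀ i k j, pat6 i j ∣ pat6 i k * pat6 k j := by decide

theorem sp_mul {a b : M4} (ha : a ∈ Sp4Z) (hb : b ∈ Sp4Z) : a * b ∈ Sp4Z := by
  simp only [Sp4Z, Set.mem_ofPred_eq] at *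
  calc (a * b)ᵀ * J4 * (a * b) = bᵀ * (aᵀ * J4 * a) * b := by
        simp only [Matrix.transpose_mul, Matrix.mul_assoc]
    _ = J4 := by rw [ha, hb]

theorem J4_sq : J4 * J4 = -1 := by decide
theorem J4_tr : J4ᵀ = -J4 := by decide
theorem zeta_sq : zetaM * zetaM = 1 := by decide
theorem zeta_sp : zetaM ∈ Sp4Z := by
  show zetaMᵀ * J4 * zetaM = J4
  decide

theorem nat_one : (1 : M4) ∈ Gamma6nat := by
  refine ⟨?_, fun i j => by simp⟩
  simp [Sp4Z]

theorem nat_mul {a b : M4} (ha : a ∈ Gamma6nat) (hb : b ∈ Gamma6nat) : a * b ∈ Gamma6nat := by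
  refine ⟨sp_mul ha.1 hb.1, fun i j => ?_⟩
  have h : a * b - 1 = (a - 1) * (b - 1) + (a - 1) + (b - 1) := by noncomm_ring
  rw [h, Matrix.add_apply, Matrix.add_apply, Matrix.mul_apply]
  refine dvd_add (dvd_add (Finset.dvd_sum fun k _ => ?_) (ha.2 i j)) (hb.2 i j)
  exact (pat6_mul i k j).trans (mul_dvd_mul (ha.2 i k) (hb.2 k j))

theorem nat_inv {a : M4} (ha : a ∈ Gamma6nat) :
    ∃ d ∈ Gamma6nat, a * d = 1 ∧ d * a = 1 := by
  have h0 : aᵀ * J4 * a = J4 := ha.1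
  have h1 : (-(J4 * aᵀ * J4)) * a = 1 := by
    have : (-(J4 * aᵀ * J4)) * a = -(J4 * (aᵀ * J4 * a)) := by
      simp only [Matrix.neg_mul, Matrix.mul_assoc]
    rw [this, h0, J4_sq, neg_neg]
  have h2 : a * (-(J4 * aᵀ * J4)) = 1 := mul_eq_one_comm.mp h1
  refine ⟨_, ⟨?_, fun i j => ?_⟩, h2, h1⟩
  · generalize -(J4 * aᵀ * J4) = d at h2
    show dᵀ * J4 * d = J4
    have h3 : dᵀ * aᵀ = 1 := by rw [← Matrix.transpose_mul, h2, Matrix.transpose_one]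
    calc dᵀ * J4 * d = dᵀ * (aᵀ * J4 * a) * d := by rw [h0]
      _ = (dᵀ * aᵀ) * J4 * (a * d) := by simp only [Matrix.mul_assoc]
      _ = J4 := by rw [h2, h3, Matrix.one_mul, Matrix.mul_one]
  · have h4 : -(J4 * aᵀ * J4) - 1 = -(J4 * (a - 1)ᵀ * J4) := by
      rw [Matrix.transpose_sub, Matrix.transpose_one, Matrix.mul_sub, Matrix.sub_mul,
        Matrix.mul_one, J4_sq]
      abel
    rw [h4]
    have hh := ha.2
    generalize a - 1 = c at hh
    simp only [Fin.forall_fin_succ, pat6] at hh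
    simp at hh
    simp only [Matrix.neg_apply, Matrix.mul_apply, Fin.sum_univ_four, Matrix.transpose_apply]
    fin_cases i <;> fin_cases j <;> simp [J4, pat6, hh]

theorem nat_conj {a : M4} (ha : a ∈ Gamma6nat) : zetaM * a * zetaM ∈ Gamma6nat := by
  refine ⟨sp_mul (sp_mul zeta_sp ha.1) zeta_sp, fun i j => ?_⟩
  have h4 : zetaM * a * zetaM - 1 = zetaM * (a - 1) * zetaM := by
    rw [Matrix.mul_sub, Matrix.sub_mul, Matrix.mul_one, zeta_sq]
  rw [h4]
  have hh := ha.2 i j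
  generalize a - 1 = c at hh
  simp only [Matrix.mul_apply, Fin.sum_univ_four]
  fin_cases i <;> fin_cases j <;> simpa [zetaM, pat6] using hh

theorem zeta_zeta (x : M4) : zetaM * (zetaM * x) = x := by
  rw [← Matrix.mul_assoc, zeta_sq, Matrix.one_mul]

/-- Γ₆^bil = Γ₆^♮ ∪ ζΓ₆^♮ is a subgroup of Sp(4,ℤ); in particular Γ₆^♮ is a
subgroup of Sp(4,ℤ), ζ ∈ Sp(4,ℤ), ζ² = I₄, and ζ normalizes Γ₆^♮. -/
theorem bilevel_is_subgroup :
    Gamma6bil ⊆ Sp4Z ∧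
    (1 : M4) ∈ Gamma6bil ∧
    (∀ γ δ : M4, γ ∈ Gamma6bil → δ ∈ Gamma6bil → γ * δ ∈ Gamma6bil) ∧
    (∀ γ ∈ Gamma6bil, ∃ δ ∈ Gamma6bil, γ * δ = 1 ∧ δ * γ = 1) ∧
    Gamma6nat ⊆ Sp4Z ∧
    (1 : M4) ∈ Gamma6nat ∧
    (∀ γ δ : M4, γ ∈ Gamma6nat → δ ∈ Gamma6nat → γ * δ ∈ Gamma6nat) ∧
    (∀ γ ∈ Gamma6nat, ∃ δ ∈ Gamma6nat, γ * δ = 1 ∧ δ * γ = 1) ∧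
    zetaM ∈ Sp4Z ∧
    zetaM * zetaM = 1 ∧
    (fun γ => zetaM * γ * zetaM) '' Gamma6nat = Gamma6nat := by
  refine ⟨?_, Or.inl nat_one, ?_, ?_, fun a h => h.1, nat_one, fun _ _ => nat_mul,
    fun _ => nat_inv, zeta_sp, zeta_sq, ?_⟩
  · rintro a (h | ⟨b, h, rfl⟩)
    · exact h.1
    · exact sp_mul zeta_sp h.1
  · rintro _ _ (ha | ⟨a, ha, rfl⟩) (hb | ⟨b, hb, rfl⟩)
    · exact Or.inl (nat_mul ha hb)
    · refine Or.inr ⟨_, nat_mul (nat_conj ha) hb, ?_⟩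
      simp only [Matrix.mul_assoc, zeta_zeta]
    · refine Or.inr ⟨_, nat_mul ha hb, ?_⟩
      simp only [Matrix.mul_assoc]
    · refine Or.inl ?_
      have := nat_mul (nat_conj ha) hb
      simpa only [Matrix.mul_assoc] using this
  · rintro _ (ha | ⟨a, ha, rfl⟩)
    · obtain ⟨d, hd, h⟩ := nat_inv ha
      exact ⟨d, Or.inl hd, h⟩
    · obtain ⟨d, hd, h1, h2⟩ := nat_inv ha
      refine ⟨d * zetaM, Or.inr ⟨_, nat_conj hd, ?_⟩, ?_, ?_⟩
      · simp only [Matrix.mul_assoc, zeta_zeta]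
      · calc zetaM * a * (d * zetaM) = zetaM * (a * d) * zetaM := by
              simp only [Matrix.mul_assoc]
          _ = 1 := by rw [h1, Matrix.mul_one, zeta_sq]
      · simp only [Matrix.mul_assoc, zeta_zeta, h2]
  · ext a
    constructor
    · rintro ⟨b, hb, rfl⟩
      exact nat_conj hb
    · intro ha
      refine ⟨_, nat_conj ha, ?_⟩
      simp only [Matrix.mul_assoc, zeta_zeta, zeta_sq, Matrix.mul_one]
end

section
/- For every γ ∈ Γ₆^♮, the characteristic polynomial det(γ − x·I₄) ∈ ℤ[x] is congruent to (1 − x)⁴ modulo 6; that is, every coefficient of det(γ − x·I₄) − (1 − x)⁴ is divisible by 6. -/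
open Matrix Polynomial

/-- For γ ∈ Γ₆^♮, the characteristic polynomial det(γ − x·I₄) is congruent to
(1 − x)⁴ modulo 6: every coefficient of the difference is divisible by 6. -/
theorem charpoly_congruent_mod_six (γ : M4) (hγ : γ ∈ Gamma6nat) (n : ℕ) :
    (6 : ℤ) ∣
      (Matrix.det (γ.map (Polynomial.C) -
          (Polynomial.X : ℤ[X]) • (1 : Matrix (Fin 4) (Fin 4) ℤ[X])) -
        (1 - Polynomial.X) ^ 4).coeff n := by
  have h := hγ.2
  have key : ∀ i j, pat6 i j ≠ 1 → ((γ i j : ℤ) : ZMod 6) = (1 : Matrix (Fin 4) (Fin 4) (ZMod 6)) i j := by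
    intro i j hij
    have h6 : (6 : ℤ) ∣ (γ - 1) i j := by
      refine dvd_trans ?_ (h i j)
      revert hij
      fin_cases i <;> fin_cases j <;> simp [pat6]
    have h7 := (ZMod.intCast_zmod_eq_zero_iff_dvd _ 6).2 (by exact_mod_cast h6)
    rw [Matrix.sub_apply, Int.cast_sub, sub_eq_zero] at h7
    rw [h7, Matrix.one_apply, Matrix.one_apply]
    split_ifs <;> simp
  have main : (Matrix.det (γ.map (Polynomial.C) -
          (Polynomial.X : ℤ[X]) • (1 : Matrix (Fin 4) (Fin 4) ℤ[X])) -
        (1 - Polynomial.X) ^ 4).map (Int.castRingHom (ZMod 6)) = 0 := by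
    have e00 := key 0 0 (by simp [pat6])
    have e02 := key 0 2 (by simp [pat6])
    have e03 := key 0 3 (by simp [pat6])
    have e10 := key 1 0 (by simp [pat6])
    have e11 := key 1 1 (by simp [pat6])
    have e12 := key 1 2 (by simp [pat6])
    have e13 := key 1 3 (by simp [pat6])
    have e20 := key 2 0 (by simp [pat6])
    have e22 := key 2 2 (by simp [pat6])
    have e23 := key 2 3 (by simp [pat6])
    have e33 := key 3 3 (by simp [pat6])
    simp at e00 e02 e03 e10 e11 e12 e13 e20 e22 e23 e33
    rw [Polynomial.map_sub, ← Polynomial.coe_mapRingHom, RingHom.map_det]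
    have hM : (Polynomial.mapRingHom (Int.castRingHom (ZMod 6))).mapMatrix
        (γ.map (Polynomial.C) - (Polynomial.X : ℤ[X]) • (1 : Matrix (Fin 4) (Fin 4) ℤ[X])) =
        !![1 - X, C ((γ 0 1 : ℤ) : ZMod 6), 0, 0;
           0, 1 - X, 0, 0;
           0, C ((γ 2 1 : ℤ) : ZMod 6), 1 - X, 0;
           C ((γ 3 0 : ℤ) : ZMod 6), C ((γ 3 1 : ℤ) : ZMod 6),
             C ((γ 3 2 : ℤ) : ZMod 6), 1 - X] := by
      have c : ∀ i j, ((γ i j : ℤ) : (ZMod 6)[X]) = Polynomial.C ((γ i j : ℤ) : ZMod 6) := by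
        intro i j; simp
      ext1 i j
      fin_cases i <;> fin_cases j <;>
        simp [-map_intCast, c, e00, e02, e03, e10, e11, e12, e13, e20, e22, e23, e33]
    rw [hM, Matrix.det_succ_row_zero]
    simp [Fin.sum_univ_succ, Matrix.det_fin_three, Fin.succAbove]
    ring
  have h8 := congrArg (fun p => p.coeff n) main
  simp only [Polynomial.coeff_map, Polynomial.coeff_zero] at h8
  exact_mod_cast (ZMod.intCast_zmod_eq_zero_iff_dvd _ 6).1 h8
end

section
/- The group Γ₆^♮ is neat: if γ ∈ Γ₆^♮ and λ ∈ ℂ is an eigenvalue of γ (i.e. a root of the characteristic polynomial det(γ − x·I₄)) which is a root of unity, then λ = 1. -/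
open Matrix Polynomial

/-- The characteristic polynomial of `γ - 1` has coefficients divisible by `6, 6, 36, 36`. -/
lemma charpoly_div (γ : M4) (hγ : γ ∈ Gamma6nat) (lam : ℂ)
    (heig : Matrix.det (γ.map (Int.cast : ℤ → ℂ) -
      lam • (1 : Matrix (Fin 4) (Fin 4) ℂ)) = 0) :
    ∃ a b c d : ℤ, (lam - 1) ^ 4 + 6 * a * (lam - 1) ^ 3 + 6 * b * (lam - 1) ^ 2
      + 36 * c * (lam - 1) + 36 * d = 0 := by
  have hd := hγ.2
  obtain ⟨k00, h00⟩ := hd 0 0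
  obtain ⟨k01, h01⟩ := hd 0 1
  obtain ⟨k02, h02⟩ := hd 0 2
  obtain ⟨k03, h03⟩ := hd 0 3
  obtain ⟨k10, h10⟩ := hd 1 0
  obtain ⟨k11, h11⟩ := hd 1 1
  obtain ⟨k12, h12⟩ := hd 1 2
  obtain ⟨k13, h13⟩ := hd 1 3
  obtain ⟨k20, h20⟩ := hd 2 0
  obtain ⟨k21, h21⟩ := hd 2 1
  obtain ⟨k22, h22⟩ := hd 2 2
  obtain ⟨k23, h23⟩ := hd 2 3
  obtain ⟨k30, h30⟩ := hd 3 0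
  obtain ⟨k31, h31⟩ := hd 3 1
  obtain ⟨k32, h32⟩ := hd 3 2
  obtain ⟨k33, h33⟩ := hd 3 3
  have g00 : γ 0 0 = 1 + 6 * k00 := by
    simp [pat6] at h00; linarith
  have g01 : γ 0 1 = 0 + 1 * k01 := by
    simp [pat6] at h01; linarith
  have g02 : γ 0 2 = 0 + 6 * k02 := by
    simp [pat6] at h02; linarith
  have g03 : γ 0 3 = 0 + 6 * k03 := by
    simp [pat6] at h03; linarith
  have g10 : γ 1 0 = 0 + 6 * k10 := by
    simp [pat6] at h10; linarith
  have g11 : γ 1 1 = 1 + 6 * k11 := by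
    simp [pat6] at h11; linarith
  have g12 : γ 1 2 = 0 + 6 * k12 := by
    simp [pat6] at h12; linarith
  have g13 : γ 1 3 = 0 + 36 * k13 := by
    simp [pat6] at h13; linarith
  have g20 : γ 2 0 = 0 + 6 * k20 := by
    simp [pat6] at h20; linarith
  have g21 : γ 2 1 = 0 + 1 * k21 := by
    simp [pat6] at h21; linarith
  have g22 : γ 2 2 = 1 + 6 * k22 := by
    simp [pat6] at h22; linarith
  have g23 : γ 2 3 = 0 + 6 * k23 := by
    simp [pat6] at h23; linarith
  have g30 : γ 3 0 = 0 + 1 * k30 := by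
    simp [pat6] at h30; linarith
  have g31 : γ 3 1 = 0 + 1 * k31 := by
    simp [pat6] at h31; linarith
  have g32 : γ 3 2 = 0 + 1 * k32 := by
    simp [pat6] at h32; linarith
  have g33 : γ 3 3 = 1 + 6 * k33 := by
    simp [pat6] at h33; linarith
  simp [Matrix.det_succ_row_zero, Fin.sum_univ_succ, Fin.succAbove, Matrix.one_apply] at heig
  simp [g00, g01, g02, g03, g10, g11, g12, g13, g20, g21, g22, g23, g30, g31, g32, g33] at heig
  refine ⟨-1*k00 - 1*k11 - 1*k22 - 1*k33,
      6*k00*k11 - 1*k01*k10 + 6*k00*k22 - 6*k02*k20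
      + 6*k00*k33 - 1*k03*k30 + 6*k11*k22 - 1*k12*k21
      + 6*k11*k33 - 6*k13*k31 + 6*k22*k33 - 1*k23*k32,
      -6*k00*k11*k22 + 1*k00*k12*k21 + 1*k01*k10*k22 - 1*k01*k12*k20
      - 1*k02*k10*k21 + 6*k02*k11*k20 - 6*k00*k11*k33 + 6*k00*k13*k31
      + 1*k01*k10*k33 - 1*k01*k13*k30 - 1*k03*k10*k31 + 1*k03*k11*k30
      - 6*k00*k22*k33 + 1*k00*k23*k32 + 6*k02*k20*k33 - 1*k02*k23*k30
      - 1*k03*k20*k32 + 1*k03*k22*k30 - 6*k11*k22*k33 + 1*k11*k23*k32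
      + 1*k12*k21*k33 - 1*k12*k23*k31 - 1*k13*k21*k32 + 6*k13*k22*k31,
      36*k00*k11*k22*k33 - 6*k00*k11*k23*k32 - 6*k00*k12*k21*k33 + 6*k00*k12*k23*k31
      + 6*k00*k13*k21*k32 - 36*k00*k13*k22*k31 - 6*k01*k10*k22*k33 + 1*k01*k10*k23*k32
      + 6*k01*k12*k20*k33 - 1*k01*k12*k23*k30 - 6*k01*k13*k20*k32 + 6*k01*k13*k22*k30
      + 6*k02*k10*k21*k33 - 6*k02*k10*k23*k31 - 36*k02*k11*k20*k33 + 6*k02*k11*k23*k30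
      + 36*k02*k13*k20*k31 - 6*k02*k13*k21*k30 - 1*k03*k10*k21*k32 + 6*k03*k10*k22*k31
      + 6*k03*k11*k20*k32 - 6*k03*k11*k22*k30 - 6*k03*k12*k20*k31 + 1*k03*k12*k21*k30, ?_⟩
  push_cast
  linear_combination heig

/-- `(lam - 1)² / 6` is an algebraic integer. -/
lemma integral_sq_div (m : ℂ) (a b c d : ℤ)
    (h : m ^ 4 + 6 * a * m ^ 3 + 6 * b * m ^ 2 + 36 * c * m + 36 * d = 0) :
    IsIntegral ℤ (m ^ 2 / 6) := by
  have h1 : (m ^ 2 / 6) ^ 2 + b * (m ^ 2 / 6) + d = -(m * (a * (m ^ 2 / 6) + c)) := by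
    linear_combination h / 36
  have h2 : ((m ^ 2 / 6) ^ 2 + b * (m ^ 2 / 6) + d) ^ 2
      = 6 * (m ^ 2 / 6) * (a * (m ^ 2 / 6) + c) ^ 2 := by
    rw [h1]; ring
  generalize m ^ 2 / 6 = t at h2
  refine ⟨X ^ 4 + (C (2 * b - 6 * a ^ 2) * X ^ 3 + C (b ^ 2 + 2 * d - 12 * a * c) * X ^ 2
    + C (2 * b * d - 6 * c ^ 2) * X + C (d ^ 2)), ?_, ?_⟩
  · apply monic_X_pow_add
    compute_degree!
  · simp only [eval₂_add, eval₂_mul, eval₂_C, eval₂_X_pow, eval₂_X]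
    simp only [eq_intCast]
    push_cast
    linear_combination h2

/-- If `q` is prime and `lam` is a primitive `q`-th root of unity, then `(lam-1)²/6` is not an
algebraic integer. -/
lemma not_integral_prime (q : ℕ) (hq : q.Prime) (z : ℂ) (hz : IsPrimitiveRoot z q)
    (hi : IsIntegral ℤ ((z - 1) ^ 2 / 6)) : False := by
  have hzi : IsIntegral ℤ z := hz.isIntegral hq.pos
  have hprod : ∏ k ∈ Finset.range (q - 1), (1 - z ^ (k + 1)) = (q : ℂ) := by
    obtain ⟨n, rfl⟩ : ∃ n, q = n + 1 := ⟨q - 1, by have := hq.pos; omega⟩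
    simpa using hz.prod_one_sub_pow_eq_order
  have hone : IsIntegral ℤ (∏ k ∈ Finset.range (q - 1), (∑ j ∈ Finset.range (k + 1), z ^ j)) :=
    IsIntegral.prod _ fun k _ => IsIntegral.sum _ fun j _ => hzi.pow j
  have hfac : (q : ℂ) ^ 2 = (z - 1) ^ (2 * (q - 1)) *
      (∏ k ∈ Finset.range (q - 1), (∑ j ∈ Finset.range (k + 1), z ^ j)) ^ 2 := by
    rw [← hprod, ← Finset.prod_pow, ← Finset.prod_pow, pow_mul]
    conv_rhs => rw [← Finset.card_range (q - 1), ← Finset.prod_const, Finset.card_range,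
      ← Finset.prod_mul_distrib]
    refine Finset.prod_congr rfl fun k _ => ?_
    rw [← geom_sum_mul z (k + 1) |> fun h => (by linear_combination -h :
      (-(∑ j ∈ Finset.range (k + 1), z ^ j) * (z - 1)) = 1 - z ^ (k + 1))]
    ring
  have hquot : IsIntegral ℤ ((q : ℂ) ^ 2 / 6) := by
    obtain ⟨r, hr⟩ : ∃ r, q - 1 = r + 1 := ⟨q - 2, by have := hq.two_le; omega⟩
    have : (q : ℂ) ^ 2 / 6 = ((z - 1) ^ 2 / 6) * (z - 1) ^ (2 * r) *
      (∏ k ∈ Finset.range (q - 1), (∑ j ∈ Finset.range (k + 1), z ^ j)) ^ 2 := by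
      rw [hfac, hr]; ring
    rw [this]
    exact (hi.mul ((hzi.sub isIntegral_one).pow _)).mul (hone.pow _)
  have hquotRat : IsIntegral ℤ ((q : ℚ) ^ 2 / 6) := by
    rw [← isIntegral_algebraMap_iff (algebraMap ℚ ℂ).injective]
    simpa using hquot
  obtain ⟨y, hy⟩ := IsIntegrallyClosed.isIntegral_iff.mp hquotRat
  have hy' : (6 * y : ℚ) = (q : ℚ) ^ 2 := by
    simp at hy; rw [hy]; ring
  have h6 : (6 : ℤ) ∣ ((q ^ 2 : ℕ) : ℤ) := ⟨y, by push_cast; exact_mod_cast hy'.symm⟩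
  have h6' : 6 ∣ q ^ 2 := by exact_mod_cast h6
  have h2 : 2 ∣ q := Nat.prime_two.dvd_of_dvd_pow ((by norm_num : 2 ∣ 6).trans h6')
  have h3 : 3 ∣ q := Nat.prime_three.dvd_of_dvd_pow ((by norm_num : 3 ∣ 6).trans h6')
  have e2 := (Nat.prime_dvd_prime_iff_eq Nat.prime_two hq).mp h2
  have e3 := (Nat.prime_dvd_prime_iff_eq Nat.prime_three hq).mp h3
  omega

/-- Γ₆^♮ is neat: any eigenvalue λ ∈ ℂ of γ ∈ Γ₆^♮ (a root of det(γ − x·I₄))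
which is a root of unity equals 1. -/
theorem Gamma6nat_neat (γ : M4) (hγ : γ ∈ Gamma6nat) (lam : ℂ)
    (heig : Matrix.det (γ.map (Int.cast : ℤ → ℂ) -
      lam • (1 : Matrix (Fin 4) (Fin 4) ℂ)) = 0)
    (hru : ∃ n : ℕ, 1 ≤ n ∧ lam ^ n = 1) :
    lam = 1 := by
  obtain ⟨a, b, c, d, h⟩ := charpoly_div γ hγ lam heig
  have hi := integral_sq_div (lam - 1) a b c d h
  obtain ⟨n, hn, hn1⟩ := hru
  by_contra hne
  have hpos : 0 < orderOf lam := orderOf_pos_iff.mpr (isOfFinOrder_iff_pow_eq_one.mpr ⟨n, hn, hn1⟩)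
  have hord : orderOf lam ≠ 1 := fun h => hne (orderOf_eq_one_iff.mp h)
  obtain ⟨q, hq, e, he⟩ := Nat.exists_prime_and_dvd hord
  have hprim : IsPrimitiveRoot (lam ^ e) q :=
    (IsPrimitiveRoot.orderOf lam).pow hpos (by rw [he, mul_comm])
  have hlam : IsIntegral ℤ lam := (IsPrimitiveRoot.orderOf lam).isIntegral hpos
  refine not_integral_prime q hq (lam ^ e) hprim ?_
  have : (lam ^ e - 1) ^ 2 / 6 = (∑ j ∈ Finset.range e, lam ^ j) ^ 2 * ((lam - 1) ^ 2 / 6) := by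
    rw [← geom_sum_mul]; ring
  rw [this]
  exact ((IsIntegral.sum _ fun j _ => hlam.pow j).pow 2).mul hi
end

section
/- The group Γ₆^♮ is torsion-free: if γ ∈ Γ₆^♮ and γⁿ = I₄ for some integer n ≥ 1, then γ = I₄. -/
open Matrix Polynomial

theorem one_add_pow_expand (N : M4) (q : ℕ) :
    ∃ R : M4, Commute N R ∧ (1 + N) ^ q = 1 + (q : ℤ) • N + N ^ 2 * R := by
  induction q with
  | zero => exact ⟨0, Commute.zero_right N, by simp⟩
  | succ q ih =>
    obtain ⟨R, hc, hR⟩ := ih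
    refine ⟨(q : ℤ) • 1 + R + R * N, ?_, ?_⟩
    · exact (((Commute.one_right N).smul_right _).add_right hc).add_right
        (hc.mul_right (Commute.refl N))
    · rw [pow_succ, hR]
      push_cast
      simp only [mul_add, add_mul, one_mul, mul_one, add_smul, one_smul, smul_mul_assoc,
        mul_smul_comm, pow_two, mul_assoc]
      abel

theorem eq_zero_of_coprime (N : M4) (p : ℤ) (hp : 2 ≤ p) (q : ℕ) (hpq : IsCoprime p (q : ℤ))
    (X : M4) (hX : N ^ 3 = p • X) (h : (1 + N) ^ q = 1) : N = 0 := by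
  obtain ⟨R, hc, hR⟩ := one_add_pow_expand N q
  have h1 : (q : ℤ) • N = N * (N * -R) := by
    rw [h, add_assoc, left_eq_add] at hR
    rw [eq_neg_of_add_eq_zero_left hR, pow_two, mul_neg, mul_neg, mul_assoc]
  have hcR : Commute N (N * -R) := (Commute.refl N).mul_right hc.neg_right
  have h2 : ∀ k : ℕ, (q : ℤ) ^ k • N = N * (N * -R) ^ k := by
    intro k
    induction k with
    | zero => simp
    | succ k ih =>
      rw [pow_succ', mul_smul, ih, ← smul_mul_assoc, h1, pow_succ', mul_assoc]
  have h3 : ∀ k : ℕ, ∃ Y : M4, (q : ℤ) ^ (3 * k) • N = p ^ k • Y := by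
    intro k
    refine ⟨N * (X ^ k * (-R) ^ (3 * k)), ?_⟩
    rw [h2, hc.neg_right.mul_pow, pow_mul N, hX, _root_.smul_pow, smul_mul_assoc, mul_smul_comm]
  ext i j
  by_contra hne
  have h4 : ∀ k : ℕ, p ^ k ∣ N i j := by
    intro k
    obtain ⟨Y, hY⟩ := h3 k
    have := congrFun (congrFun hY i) j
    simp only [Matrix.smul_apply, smul_eq_mul] at this
    exact (hpq.pow (m := k) (n := 3 * k)).dvd_of_dvd_mul_left ⟨_, this⟩
  have h5 : FiniteMultiplicity p (N i j) := by
    rw [Int.finiteMultiplicity_iff]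
    refine ⟨?_, hne⟩
    omega
  exact h5.not_pow_dvd_of_multiplicity_lt (Nat.lt_succ_self _) (h4 _)

theorem pow_eq_one_of_coprime (γ : M4) (p : ℤ) (hp : 2 ≤ p) (m q : ℕ)
    (hpq : IsCoprime p (q : ℤ)) (X : M4) (hX : (γ - 1) ^ 3 = p • X)
    (h : (γ ^ m) ^ q = 1) : γ ^ m = 1 := by
  have hg : (γ - 1) * (∑ i ∈ Finset.range m, γ ^ i) = γ ^ m - 1 := mul_geom_sum γ m
  have hc : Commute (γ - 1) (∑ i ∈ Finset.range m, γ ^ i) := by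
    refine Commute.sum_right _ _ _ fun i _ => ?_
    exact ((Commute.refl γ).pow_right i).sub_left (Commute.one_left _)
  have := eq_zero_of_coprime (γ ^ m - 1) p hp q hpq (X * (∑ i ∈ Finset.range m, γ ^ i) ^ 3)
    (by rw [← hg, hc.mul_pow, hX, smul_mul_assoc]) (by rwa [add_sub_cancel])
  exact sub_eq_zero.mp this

theorem cube_dvd (N : M4) (hN : ∀ i j, pat6 i j ∣ N i j) : ∃ X : M4, N ^ 3 = (6 : ℤ) • X := by
  have key : ∀ i j, (6 : ℤ) ∣ (N ^ 3) i j := by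
    have hz : (N.map (Int.cast : ℤ → ZMod 6)) ^ 3 = 0 := by
      have e : ∀ i j, (6 : ℤ) ∣ pat6 i j → ((N i j : ℤ) : ZMod 6) = 0 := fun i j h =>
        (ZMod.intCast_zmod_eq_zero_iff_dvd _ 6).2 (h.trans (hN i j))
      have e00 := e 0 0 (by decide)
      have e02 := e 0 2 (by decide)
      have e03 := e 0 3 (by decide)
      have e10 := e 1 0 (by decide)
      have e11 := e 1 1 (by decide)
      have e12 := e 1 2 (by decide)
      have e13 := e 1 3 (by decide)
      have e20 := e 2 0 (by decide)
      have e22 := e 2 2 (by decide)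
      have e23 := e 2 3 (by decide)
      have e33 := e 3 3 (by decide)
      ext i j
      fin_cases i <;> fin_cases j <;>
        simp [pow_succ, Matrix.mul_apply, Fin.sum_univ_four, *]
    intro i j
    have h2 : (N ^ 3).map (Int.cast : ℤ → ZMod 6) = 0 := by
      rw [← hz]
      exact map_pow (Int.castRingHom (ZMod 6)).mapMatrix N 3
    exact (ZMod.intCast_zmod_eq_zero_iff_dvd _ 6).1 (congrFun (congrFun h2 i) j)
  choose X hX using key
  exact ⟨X, by ext i j; exact hX i j⟩

/-- Γ₆^♮ is torsion-free: if γ ∈ Γ₆^♮ and γⁿ = I₄ for some n ≥ 1, then γ = I₄. -/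
theorem Gamma6nat_torsionFree (γ : M4) (hγ : γ ∈ Gamma6nat) (n : ℕ) (hn : 1 ≤ n)
    (h : γ ^ n = 1) : γ = 1 := by
  obtain ⟨X, hX⟩ := cube_dvd (γ - 1) hγ.2
  obtain ⟨a, m, hm, rfl⟩ := Nat.exists_eq_two_pow_mul_odd (n := n) (by omega)
  have h1 : γ ^ (2 ^ a) = 1 := by
    refine pow_eq_one_of_coprime γ 2 le_rfl (2 ^ a) m ?_ ((3 : ℤ) • X) ?_ (by rw [← pow_mul, h])
    · exact_mod_cast Nat.isCoprime_iff_coprime.2 (Nat.coprime_two_left.2 hm)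
    · rw [hX, smul_smul]; norm_num
  have h2 := pow_eq_one_of_coprime γ 3 (by norm_num) 1 (2 ^ a) ?_ ((2 : ℤ) • X) ?_
    (by rw [pow_one, h1])
  · simpa using h2
  · push_cast
    exact IsCoprime.pow_right (by norm_num)
  · rw [hX, smul_smul]; norm_num
end

section
/- For every γ' ∈ Γ₆^♮, the characteristic polynomial det(ζγ' − x·I₄) ∈ ℤ[x] is congruent to (1 − x)²(1 + x)² modulo 6; that is, every coefficient of det(ζγ' − x·I₄) − (1 − x)²(1 + x)² is divisible by 6. -/
open Matrix Polynomial

/-- For γ' ∈ Γ₆^♮, the characteristic polynomial det(ζγ' − x·I₄) is congruent to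
(1 − x)²(1 + x)² modulo 6: every coefficient of the difference is divisible by 6. -/
theorem charpoly_zeta_congruent_mod_six (γ' : M4) (hγ' : γ' ∈ Gamma6nat) (n : ℕ) :
    (6 : ℤ) ∣
      (Matrix.det ((zetaM * γ').map (Polynomial.C) -
          (Polynomial.X : ℤ[X]) • (1 : Matrix (Fin 4) (Fin 4) ℤ[X])) -
        (1 - Polynomial.X) ^ 2 * (1 + Polynomial.X) ^ 2).coeff n := by
  obtain ⟨-, h⟩ := hγ'
  have key : ∀ i j, (6 : ℤ) ∣ pat6 i j → ((γ' i j : ℤ) : ZMod 6) = (((1 : M4) i j : ℤ) : ZMod 6) := by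
    intro i j hp
    have h1 := (ZMod.intCast_zmod_eq_zero_iff_dvd ((γ' - 1) i j) 6).2 (hp.trans (h i j))
    rw [Matrix.sub_apply, Int.cast_sub] at h1
    exact sub_eq_zero.1 h1
  have e00 := key 0 0 (by decide)
  have e02 := key 0 2 (by decide)
  have e03 := key 0 3 (by decide)
  have e10 := key 1 0 (by decide)
  have e11 := key 1 1 (by decide)
  have e12 := key 1 2 (by decide)
  have e13 := key 1 3 (by decide)
  have e20 := key 2 0 (by decide)
  have e22 := key 2 2 (by decide)
  have e23 := key 2 3 (by decide)
  have e33 := key 3 3 (by decide)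
  simp at e00 e02 e03 e10 e11 e12 e13 e20 e22 e23 e33
  refine (ZMod.intCast_zmod_eq_zero_iff_dvd _ 6).1 ?_
  rw [← eq_intCast (Int.castRingHom (ZMod 6)), ← Polynomial.coeff_map]
  suffices hs : Polynomial.map (Int.castRingHom (ZMod 6)) (Matrix.det ((zetaM * γ').map (Polynomial.C) -
          (Polynomial.X : ℤ[X]) • (1 : Matrix (Fin 4) (Fin 4) ℤ[X])) -
        (1 - Polynomial.X) ^ 2 * (1 + Polynomial.X) ^ 2) = 0 by
    rw [hs, Polynomial.coeff_zero]
  rw [Polynomial.map_sub, ← Polynomial.coe_mapRingHom, RingHom.map_det]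
  have hm : (Polynomial.mapRingHom (Int.castRingHom (ZMod 6))).mapMatrix
      ((zetaM * γ').map (Polynomial.C) -
          (Polynomial.X : ℤ[X]) • (1 : Matrix (Fin 4) (Fin 4) ℤ[X])) =
      !![-1 - X, -C ((γ' 0 1 : ℤ) : ZMod 6), 0, 0;
         0, 1 - X, 0, 0;
         0, -C ((γ' 2 1 : ℤ) : ZMod 6), -1 - X, 0;
         C ((γ' 3 0 : ℤ) : ZMod 6), C ((γ' 3 1 : ℤ) : ZMod 6), C ((γ' 3 2 : ℤ) : ZMod 6), 1 - X] := by
    have hz : ∀ i j, (zetaM * γ') i j = (![-1, 1, -1, 1] : Fin 4 → ℤ) i * γ' i j := by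
      intro i j
      rw [Matrix.mul_apply, Fin.sum_univ_four]
      fin_cases i <;> simp [zetaM]
    have hent : ∀ i j, (Polynomial.mapRingHom (Int.castRingHom (ZMod 6))).mapMatrix
        ((zetaM * γ').map (Polynomial.C) -
          (Polynomial.X : ℤ[X]) • (1 : Matrix (Fin 4) (Fin 4) ℤ[X])) i j =
        C (((![-1, 1, -1, 1] : Fin 4 → ℤ) i : ZMod 6)) * C ((γ' i j : ℤ) : ZMod 6)
          - if i = j then X else 0 := by
      intro i j
      rw [RingHom.mapMatrix_apply, Matrix.map_apply, Matrix.sub_apply, Matrix.map_apply, hz,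
        Matrix.smul_apply, Matrix.one_apply, map_sub, Polynomial.coe_mapRingHom,
        Polynomial.map_C, eq_intCast, Int.cast_mul, C_mul]
      split_ifs <;> simp
    ext1 i j
    rw [hent]
    fin_cases i <;> fin_cases j <;>
      simp [-map_intCast, e00, e02, e03, e10, e11, e12, e13, e20, e22, e23, e33]
  rw [hm]
  simp [Matrix.det_succ_row_zero, Fin.sum_univ_succ, Fin.succAbove]
  ring
end

section
/- Every element γ ≠ I₄ of finite order in Γ₆^bil satisfies γ² = I₄ and lies in the coset ζΓ₆^♮ (i.e. ζγ ∈ Γ₆^♮). -/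
open Matrix Polynomial

lemma pow_expand (M : ℤ) (Y : M4) (q : ℕ) :
    ∃ Z : M4, (1 + M • Y) ^ q = 1 + (M * q) • Y + (M * M) • Z := by
  induction q with
  | zero => exact ⟨0, by simp⟩
  | succ q ih =>
    obtain ⟨Z, hZ⟩ := ih
    refine ⟨Z + (q : ℤ) • (Y * Y) + M • (Z * Y), ?_⟩
    rw [pow_succ, hZ]
    simp only [mul_add, add_mul, smul_mul_assoc, mul_smul_comm, smul_smul, mul_one, one_mul]
    push_cast
    module

lemma smul_cancel (M : ℤ) (hM : M ≠ 0) (X : M4) (h : M • X = 0) : X = 0 :=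
  (smul_eq_zero.mp h).resolve_left hM

/-- Descent step. -/
lemma descent (p a : ℕ) (hpa : (p = 2 ∧ a = 2) ∨ (p = 3 ∧ a = 1)) (q : ℕ) (hq : q.Prime)
    (k : ℕ) (hk : a ≤ k) (Y : M4) (h : (1 + ((p : ℤ) ^ k) • Y) ^ q = 1) :
    ∃ Z : M4, Y = (p : ℤ) • Z := by
  have hp : p.Prime := by
    rcases hpa with ⟨rfl, _⟩ | ⟨rfl, _⟩
    · exact Nat.prime_two
    · exact Nat.prime_three
  have hp0 : (p : ℤ) ≠ 0 := by exact_mod_cast hp.ne_zero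
  obtain ⟨j, rfl⟩ := Nat.exists_eq_add_of_le hk
  by_cases hqp : q = p
  · subst hqp
    rcases hpa with ⟨rfl, rfl⟩ | ⟨rfl, rfl⟩
    · push_cast at h ⊢
      set M : ℤ := 2 ^ (2 + j) with hM
      have hM' : M = 2 * (2 * 2 ^ j) := by rw [hM]; ring
      have h2 : (2 * M) • (Y + (2 ^ j * 2 : ℤ) • (Y * Y)) = 0 := by
        have e : (1 + M • Y) ^ 2 = 1 + (2 * M) • Y + (M * M) • (Y * Y) := by
          simp only [pow_succ, pow_zero, mul_add, add_mul, smul_mul_assoc, mul_smul_comm,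
            smul_smul, mul_one, one_mul]
          module
        rw [e] at h
        have h' : (2 * M) • Y + (M * M) • (Y * Y) = 0 := by
          have := sub_eq_zero.mpr h
          rw [← this]; abel
        rw [← h', smul_add, smul_smul]
        congr 2
        rw [hM']; ring
      have h3 := smul_cancel _ (by positivity) _ h2
      refine ⟨-((2 : ℤ) ^ j • (Y * Y)), ?_⟩
      refine (eq_neg_of_add_eq_zero_left h3).trans ?_
      module
    · push_cast at h ⊢
      set M : ℤ := 3 ^ (1 + j) with hM
      have hM' : M = 3 * 3 ^ j := by rw [hM]; ring
      have h2 : (3 * M) • (Y + M • (Y * Y) + (3 * 3 ^ j * 3 ^ j : ℤ) • (Y * Y * Y)) = 0 := by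
        have e : (1 + M • Y) ^ 3 = 1 + (3 * M) • Y + (3 * M * M) • (Y * Y)
            + (M * M * M) • (Y * Y * Y) := by
          simp only [pow_succ, pow_zero, mul_add, add_mul, smul_mul_assoc, mul_smul_comm,
            smul_smul, mul_one, one_mul]
          module
        rw [e] at h
        have h' : (3 * M) • Y + (3 * M * M) • (Y * Y) + (M * M * M) • (Y * Y * Y) = 0 := by
          have := sub_eq_zero.mpr h
          rw [← this]; abel
        rw [← h', smul_add, smul_add, smul_smul, smul_smul]
        congr 2
        rw [hM']; ring
      have h3 := smul_cancel _ (by positivity) _ h2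
      refine ⟨-((3 : ℤ) ^ j • (Y * Y) + (3 ^ j * 3 ^ j : ℤ) • (Y * Y * Y)), ?_⟩
      rw [add_assoc] at h3
      refine (eq_neg_of_add_eq_zero_left h3).trans ?_
      rw [hM']
      module
  · obtain ⟨Z, hZ⟩ := pow_expand ((p : ℤ) ^ (a + j)) Y q
    rw [h] at hZ
    have h2 : ((p : ℤ) ^ (a + j)) • ((q : ℤ) • Y + ((p : ℤ) ^ (a + j)) • Z) = 0 := by
      rw [smul_add, smul_smul, smul_smul]
      have := sub_eq_zero.mpr hZ.symm
      rw [← this]; abel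
    have h3 := smul_cancel _ (pow_ne_zero _ hp0) _ h2
    have hc : IsCoprime (q : ℤ) (p : ℤ) :=
      Nat.isCoprime_iff_coprime.mpr ((Nat.coprime_primes hq hp).mpr hqp)
    obtain ⟨u, v, huv⟩ := hc
    have ha : ∃ b, a = b + 1 := by
      rcases hpa with ⟨_, rfl⟩ | ⟨_, rfl⟩
      · exact ⟨1, rfl⟩
      · exact ⟨0, rfl⟩
    obtain ⟨b, rfl⟩ := ha
    refine ⟨v • Y - (u * (p : ℤ) ^ (b + j)) • Z, ?_⟩
    have h4 : (q : ℤ) • Y = -(((p : ℤ) ^ (b + 1 + j)) • Z) := eq_neg_of_add_eq_zero_left h3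
    calc Y = (u * q + v * p) • Y := by rw [huv, one_smul]
      _ = u • ((q : ℤ) • Y) + (v * p) • Y := by module
      _ = _ := by
        rw [h4, show b + 1 + j = (b + j) + 1 by ring, pow_succ]
        module

lemma prime_case (p a : ℕ) (hpa : (p = 2 ∧ a = 2) ∨ (p = 3 ∧ a = 1)) (q : ℕ) (hq : q.Prime)
    (Y : M4) (h : (1 + ((p : ℤ) ^ a) • Y) ^ q = 1) : Y = 0 := by
  have key : ∀ j : ℕ, ∃ Z : M4, Y = ((p : ℤ) ^ j) • Z := by
    intro j
    induction j with
    | zero => exact ⟨Y, by simp⟩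
    | succ j ih =>
      obtain ⟨Z, hZ⟩ := ih
      have h' := h
      rw [hZ, smul_smul, ← pow_add] at h'
      obtain ⟨W, hW⟩ := descent p a hpa q hq (a + j) (by omega) Z h'
      exact ⟨W, by rw [hZ, hW, smul_smul, ← pow_succ]⟩
  have hp2 : 2 ≤ p := by omega
  ext i j
  obtain ⟨Z, hZ⟩ := key (Y i j).natAbs
  have hd : (p : ℤ) ^ (Y i j).natAbs ∣ Y i j :=
    ⟨Z i j, by conv_lhs => rw [hZ]
               simp⟩
  refine Int.eq_zero_of_abs_lt_dvd hd ?_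
  rw [Int.abs_eq_natAbs]
  exact_mod_cast Nat.lt_pow_self (by omega)

/-- Minkowski: finite order and congruent to 1 mod 3 or mod 4 implies trivial. -/
lemma minkowski (p a : ℕ) (hpa : (p = 2 ∧ a = 2) ∨ (p = 3 ∧ a = 1)) (n : ℕ) (hn : n ≠ 0) :
    ∀ Y : M4, (1 + ((p : ℤ) ^ a) • Y) ^ n = 1 → Y = 0 := by
  induction n using Nat.recOnMul with
  | zero => exact absurd rfl hn
  | one =>
    intro Y h
    rw [pow_one] at h
    exact prime_case p a hpa 2 Nat.prime_two Y (by rw [h]; simp)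
  | prime q hq => exact fun Y h => prime_case p a hpa q hq Y h
  | mul m k hm hk =>
    intro Y h
    obtain ⟨Z, hZ⟩ := pow_expand ((p : ℤ) ^ a) Y m
    have e : (1 + ((p : ℤ) ^ a) • Y) ^ m
        = 1 + ((p : ℤ) ^ a) • ((m : ℤ) • Y + ((p : ℤ) ^ a) • Z) := by
      rw [hZ]; module
    rw [pow_mul, e] at h
    have h0 := hk (by rintro rfl; simp at hn) _ h
    rw [h0, smul_zero, add_zero] at e
    exact hm (by rintro rfl; simp at hn) Y e

def Pat (N : M4) : Prop := ∀ i j, pat6 i j ∣ N i j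

lemma Pat.mul {A B : M4} (hA : Pat A) (hB : Pat B) : Pat (A * B) := by
  intro i j
  rw [Matrix.mul_apply]
  refine Finset.dvd_sum fun k _ => ?_
  have h : ∀ i j k, pat6 i j ∣ pat6 i k * pat6 k j := by decide
  exact (h i j k).trans (mul_dvd_mul (hA i k) (hB k j))

lemma Pat.add {A B : M4} (hA : Pat A) (hB : Pat B) : Pat (A + B) :=
  fun i j => dvd_add (hA i j) (hB i j)

lemma Pat.cube {N : M4} (hN : Pat N) : ∃ X : M4, N * N * N = (6 : ℤ) • X := by
  have key : ∀ i j, (6 : ℤ) ∣ (N * N * N) i j := by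
    intro i j
    rw [Matrix.mul_apply]
    refine Finset.dvd_sum fun k _ => ?_
    rw [Matrix.mul_apply, Finset.sum_mul]
    refine Finset.dvd_sum fun l _ => ?_
    have h : ∀ i j k l, (6 : ℤ) ∣ pat6 i l * pat6 l k * pat6 k j := by decide
    exact (h i j k l).trans (mul_dvd_mul (mul_dvd_mul (hN i l) (hN l k)) (hN k j))
  choose f hf using key
  exact ⟨Matrix.of f, by ext i j; simp [hf]⟩

lemma Pat.zeta {N : M4} (hN : Pat N) : Pat (zetaM * N * zetaM) := by
  have hz : zetaM = Matrix.diagonal ![-1, 1, -1, 1] := by decide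
  intro i j
  rw [hz, Matrix.mul_diagonal, Matrix.diagonal_mul]
  exact Dvd.dvd.mul_right (Dvd.dvd.mul_left (hN i j) _) _

/-- No torsion in the pattern group. -/
lemma torsion_free (N : M4) (hN : Pat N) (n : ℕ) (hn : n ≠ 0) (h : (1 + N) ^ n = 1) :
    1 + N = 1 := by
  obtain ⟨X, hX⟩ := hN.cube
  have e3 : (1 + N) ^ 3 = 1 + (((3 : ℕ) : ℤ) ^ 1) • (N + N * N + (2 : ℤ) • X) := by
    have : (1 + N) ^ 3 = 1 + (3 : ℤ) • N + (3 : ℤ) • (N * N) + N * N * N := by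
      simp only [pow_succ, pow_zero, mul_add, add_mul, mul_one, one_mul]
      module
    rw [this, hX]; push_cast; module
  have e4 : (1 + N) ^ 4 = 1 + (2 : ℤ) • ((2 : ℤ) • N + (3 : ℤ) • (N * N)
      + (12 : ℤ) • X + (3 : ℤ) • (X * N)) := by
    have : (1 + N) ^ 4 = 1 + (4 : ℤ) • N + (6 : ℤ) • (N * N) + (4 : ℤ) • (N * N * N)
        + N * N * N * N := by
      simp only [pow_succ, pow_zero, mul_add, add_mul, mul_one, one_mul]
      module
    rw [this, hX, smul_mul_assoc]; module
  have h3 : (1 + N) ^ 3 = 1 := by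
    have := minkowski 3 1 (Or.inr ⟨rfl, rfl⟩) n hn _ (by rw [← e3, pow_right_comm, h, one_pow])
    rw [e3, this]; simp
  have h8 : (1 + N) ^ 8 = 1 := by
    generalize ((2 : ℤ) • N + (3 : ℤ) • (N * N)
      + (12 : ℤ) • X + (3 : ℤ) • (X * N)) = W at e4
    have e8 : (1 + N) ^ 8 = 1 + (((2 : ℕ) : ℤ) ^ 2) • (W + W * W) := by
      rw [show 8 = 4 * 2 by rfl, pow_mul, e4]
      simp only [pow_succ, pow_zero, mul_add, add_mul, smul_mul_assoc, mul_smul_comm,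
            smul_smul, mul_one, one_mul]
      push_cast
      module
    have := minkowski 2 2 (Or.inl ⟨rfl, rfl⟩) n hn _ (by rw [← e8, pow_right_comm, h, one_pow])
    rw [e8, this]; simp
  calc 1 + N = ((1 + N) ^ 3) ^ 2 * ((1 + N) ^ 3 * (1 + N)) * 1 * 1 * 1 := by simp [h3]
    _ = 1 := by
      have h9 : (1 + N) ^ 9 = 1 := by rw [show 9 = 3 * 3 by rfl, pow_mul, h3, one_pow]
      have : (1 + N) = 1 := by rw [pow_succ, h8, one_mul] at h9; exact h9
      simp [this]

/-- Every finite-order element γ ≠ I₄ of Γ₆^bil satisfies γ² = I₄ and lies in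
the coset ζΓ₆^♮, i.e. ζγ ∈ Γ₆^♮. -/
theorem torsion_in_bilevel (γ : M4) (hγ : γ ∈ Gamma6bil) (hne : γ ≠ 1)
    (hfin : ∃ n : ℕ, 1 ≤ n ∧ γ ^ n = 1) :
    γ * γ = 1 ∧ zetaM * γ ∈ Gamma6nat := by
  obtain ⟨n, hn, h⟩ := hfin
  have hzz : zetaM * zetaM = 1 := by decide
  rcases hγ with hg | ⟨g, hg, rfl⟩
  · exfalso
    apply hne
    have := torsion_free (γ - 1) hg.2 n (by omega) (by rw [add_sub_cancel]; exact h)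
    rwa [add_sub_cancel] at this
  · simp only at h ⊢
    refine ⟨?_, by rw [← mul_assoc, hzz, one_mul]; exact hg⟩
    have hN : Pat (g - 1) := hg.2
    obtain ⟨N, rfl⟩ : ∃ N, g = 1 + N := ⟨g - 1, by rw [add_sub_cancel]⟩
    rw [add_sub_cancel_left] at hN
    have e : zetaM * (1 + N) * (zetaM * (1 + N))
        = 1 + (zetaM * N * zetaM + N + zetaM * N * zetaM * N) := by
      calc _ = zetaM * zetaM + (zetaM * N * zetaM + zetaM * zetaM * N
            + zetaM * N * zetaM * N) := by noncomm_ring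
        _ = _ := by rw [hzz, one_mul]
    rw [e]
    refine torsion_free _ ((hN.zeta.add hN).add (hN.zeta.mul hN)) n (by omega) ?_
    rw [← e, ← pow_two, pow_right_comm, h, one_pow]
end
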